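/- Let d, C, N be positive integers. Let f_1, ..., f_{N-1} : ℝ^d → ℝ^d be maps such that f_i is Lipschitz with constant L_i, and let L = max_{1 ≤ i ≤ N-1} L_i. Let W : ℝ^d → ℝ^C be a linear map that is Lipschitz with constant L_W. Let σ_1, ..., σ_N ≥ 0 and let A_1, ..., A_N and A'_1, ..., A'_N be vectors in ℝ^d (with Euclidean norm) satisfying: ‖A_1 − A'_1‖ ≤ σ_1; A_{i+1} = f_i(A_i) for 1 ≤ i ≤ N−1; and ‖A'_{i+1} − f_i(A'_i)‖ ≤ σ_{i+1} for 1 ≤ i ≤ N−1. Then for every class index y ∈ {1, ..., C}, ℒ(W(A_N), y) − ℒ(W(A'_N), y) ≤ √2 · L_W · Σ_{i=1}^N L^{N−i} σ_i, where ℒ(z, y) = log(Σ_{j=1}^C exp(z_j)) − z_y is the cross-entropy loss with respect to the logits z. -/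

import Mathlib

/-- Cross-entropy loss of a logit vector `z : ℝ^C` at label `y`:
`ℒ(z, y) = log (∑ j, exp (z j)) - z y`. -/
noncomputable def crossEntropy {C : ℕ} (z : EuclideanSpace ℝ (Fin C)) (y : Fin C) : ℝ :=
  Real.log (∑ j, Real.exp (z j)) - z y

theorem coord_diff_le {C : ℕ} (v : EuclideanSpace ℝ (Fin C)) (k y : Fin C) :
    v k - v y ≤ Real.sqrt 2 * ‖v‖ := by
  by_cases h : k = y
  · subst h
    rw [sub_self]
    positivity
  · have h2 : v k ^ 2 + v y ^ 2 ≤ ‖v‖ ^ 2 := by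
      rw [EuclideanSpace.real_norm_sq_eq, ← Finset.sum_pair (f := fun i => v i ^ 2) h]
      exact Finset.sum_le_sum_of_subset_of_nonneg (Finset.subset_univ _)
        (fun i _ _ => sq_nonneg _)
    refine (abs_le_of_sq_le_sq' ?_ (by positivity)).2
    rw [mul_pow, Real.sq_sqrt (by norm_num)]
    nlinarith [sq_nonneg (v k + v y)]

theorem crossEntropy_sub_le {C : ℕ} (z w : EuclideanSpace ℝ (Fin C)) (y : Fin C) :
    crossEntropy z y - crossEntropy w y ≤ Real.sqrt 2 * ‖z - w‖ := by
  haveI : Nonempty (Fin C) := ⟨y⟩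
  obtain ⟨k, hk⟩ := Finite.exists_max (fun j => (z - w) j)
  have hpos : 0 < ∑ j, Real.exp (w j) :=
    Finset.sum_pos (fun j _ => Real.exp_pos _) Finset.univ_nonempty
  have hposz : 0 < ∑ j, Real.exp (z j) :=
    Finset.sum_pos (fun j _ => Real.exp_pos _) Finset.univ_nonempty
  have hle : ∑ j, Real.exp (z j) ≤ Real.exp ((z - w) k) * ∑ j, Real.exp (w j) := by
    rw [Finset.mul_sum]
    refine Finset.sum_le_sum fun j _ => ?_
    rw [← Real.exp_add]
    apply Real.exp_le_exp.mpr
    have := hk j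
    simp only [PiLp.sub_apply] at this ⊢
    linarith
  have hlog := Real.log_le_log hposz hle
  rw [Real.log_mul (Real.exp_pos _).ne' hpos.ne', Real.log_exp] at hlog
  have hc := coord_diff_le (z - w) k y
  unfold crossEntropy
  simp only [PiLp.sub_apply] at hc hlog
  linarith

theorem loss_deviation_bound
    (d C N : ℕ) (hd : 0 < d) (hC : 0 < C) (hN : 0 < N)
    (f : ℕ → EuclideanSpace ℝ (Fin d) → EuclideanSpace ℝ (Fin d))
    (Li : ℕ → NNReal)
    (hf : ∀ i ∈ Finset.Icc 1 (N - 1), LipschitzWith (Li i) (f i))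
    (L : NNReal) (hL : L = (Finset.Icc 1 (N - 1)).sup Li)
    (W : EuclideanSpace ℝ (Fin d) →ₗ[ℝ] EuclideanSpace ℝ (Fin C))
    (LW : NNReal) (hW : LipschitzWith LW W)
    (σ : ℕ → ℝ) (hσ : ∀ i ∈ Finset.Icc 1 N, 0 ≤ σ i)
    (A A' : ℕ → EuclideanSpace ℝ (Fin d))
    (h1 : ‖A 1 - A' 1‖ ≤ σ 1)
    (hA : ∀ i ∈ Finset.Icc 1 (N - 1), A (i + 1) = f i (A i))
    (hA' : ∀ i ∈ Finset.Icc 1 (N - 1), ‖A' (i + 1) - f i (A' i)‖ ≤ σ (i + 1))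
    (y : Fin C) :
    crossEntropy (W (A N)) y - crossEntropy (W (A' N)) y ≤
      Real.sqrt 2 * (LW : ℝ) * ∑ i ∈ Finset.Icc 1 N, (L : ℝ) ^ (N - i) * σ i := by
  have key : ∀ n, 1 ≤ n → n ≤ N →
      ‖A n - A' n‖ ≤ ∑ i ∈ Finset.Icc 1 n, (L : ℝ) ^ (n - i) * σ i := by
    intro n hn
    induction n, hn using Nat.le_induction with
    | base => intro _; simpa using h1
    | succ n hn ih =>
      intro hnN
      have ih := ih (by omega)
      have hmem : n ∈ Finset.Icc 1 (N - 1) := Finset.mem_Icc.mpr ⟨hn, by omega⟩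
      have hLi : Li n ≤ L := hL ▸ Finset.le_sup hmem
      have hlip := ((hf n hmem).weaken hLi).norm_sub_le (A n) (A' n)
      have hs : ∑ i ∈ Finset.Icc 1 (n + 1), (L : ℝ) ^ (n + 1 - i) * σ i
          = (L : ℝ) * ∑ i ∈ Finset.Icc 1 n, (L : ℝ) ^ (n - i) * σ i + σ (n + 1) := by
        rw [Finset.sum_Icc_succ_top (by omega), Finset.mul_sum]
        congr 1
        · refine Finset.sum_congr rfl fun i hi => ?_
          rw [Nat.succ_sub (Finset.mem_Icc.mp hi).2, pow_succ]
          ring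
        · simp
      rw [hs, hA n hmem]
      have h3 := norm_sub_le_norm_sub_add_norm_sub (f n (A n)) (f n (A' n)) (A' (n + 1))
      have h4 := hA' n hmem
      rw [norm_sub_rev] at h4
      have h5 := mul_le_mul_of_nonneg_left ih L.coe_nonneg
      linarith
  have hk := key N hN le_rfl
  have hw := hW.norm_sub_le (A N) (A' N)
  calc _ ≤ Real.sqrt 2 * ‖W (A N) - W (A' N)‖ := crossEntropy_sub_le _ _ _
    _ ≤ Real.sqrt 2 * (LW * ‖A N - A' N‖) := by gcongr
    _ ≤ Real.sqrt 2 * (LW * ∑ i ∈ Finset.Icc 1 N, (L : ℝ) ^ (N - i) * σ i) := by gcongr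
    _ = _ := by ring
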